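/- Let 𝓔 be an abelian category, n ≥ 1, M an nℤ-cluster tilting subcategory of 𝓔, k ≥ 1, and let ξ : 0 → X⁰ → E¹ → ⋯ → E^{kn} → X^{kn+1} → 0 be an exact sequence in 𝓔 with X⁰, X^{kn+1} ∈ M (the middle terms arbitrary). Then ξ is Yoneda equivalent to a splice of k n-exact sequences in M: there exist objects Z₀ = X⁰, Z₁, …, Z_{k−1}, Z_k = X^{kn+1} in M and n-exact sequences ξ_j : 0 → Z_{j−1} → X^{(j−1)n+1} → ⋯ → X^{jn} → Z_j → 0 in M (1 ≤ j ≤ k) such that the Yoneda composite [ξ_k]∘[ξ_{k−1}]∘⋯∘[ξ₁] ∈ Ext^{kn}(X^{kn+1},X⁰) equals [ξ]. -/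

import Mathlib

open CategoryTheory CategoryTheory.Abelian CategoryTheory.Limits

universe w v u

namespace NZPaper

variable {C : Type u} [Category.{v} C] [Abelian C] [HasExt.{w} C]

/-- A full (iso-closed) subcategory, encoded as a set of objects, is `n`-cluster tilting if it
admits monic left approximations and epic right approximations and is characterized by the
vanishing of `Ext^i` for `1 ≤ i ≤ n-1` on either side. -/
def IsNClusterTilting (n : ℕ) (M : Set C) : Prop :=
  (∀ ⦃X Y : C⦄, (X ≅ Y) → X ∈ M → Y ∈ M) ∧
  (∀ E : C, ∃ (X : C) (f : E ⟶ X), X ∈ M ∧ Mono f ∧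
      ∀ X' ∈ M, ∀ g : E ⟶ X', ∃ h : X ⟶ X', f ≫ h = g) ∧
  (∀ E : C, ∃ (X : C) (f : X ⟶ E), X ∈ M ∧ Epi f ∧
      ∀ X' ∈ M, ∀ g : X' ⟶ E, ∃ h : X' ⟶ X, h ≫ f = g) ∧
  (∀ E : C, E ∈ M ↔ ∀ Y ∈ M, ∀ i : ℕ, 1 ≤ i → i < n → ∀ e : Ext E Y i, e = 0) ∧
  (∀ E : C, E ∈ M ↔ ∀ Y ∈ M, ∀ i : ℕ, 1 ≤ i → i < n → ∀ e : Ext Y E i, e = 0)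

/-- An `nℤ`-cluster tilting subcategory: in addition `Ext^k` vanishes on `M` for every
`k ≥ 1` not divisible by `n`. -/
def IsNZClusterTilting (n : ℕ) (M : Set C) : Prop :=
  IsNClusterTilting n M ∧
  ∀ X ∈ M, ∀ Y ∈ M, ∀ k : ℕ, 1 ≤ k → ¬ (n ∣ k) → ∀ e : Ext X Y k, e = 0

/-- An exact sequence `0 → Y 0 → Y 1 → ⋯ → Y m → Y (m+1) → 0` in an abelian category,
recorded together with its canonical splicing into short exact sequences
`0 → K i → Y (i+1) → K (i+1) → 0` (`K i` is the image of `d i` for `1 ≤ i ≤ m`,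
`K 0 = Y 0` and `K m = Y (m+1)`).  Only the indices `0, …, m+1` (resp. `0, …, m`) of
`Y` (resp. of the differentials and of `K`) are relevant; the remaining values are junk
(any such exact sequence can be padded by zero objects). -/
structure ExactExtension (C : Type u) [Category.{v} C] [Abelian C] (m : ℕ) where
  Y : ℕ → C
  d : ∀ i, Y i ⟶ Y (i + 1)
  K : ℕ → C
  ι : ∀ i, K i ⟶ Y (i + 1)
  π : ∀ i, Y i ⟶ K i
  hK0 : K 0 = Y 0
  hKm : K m = Y (m + 1)
  zero : ∀ i, ι i ≫ π (i + 1) = 0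
  shortExact : ∀ i, (ShortComplex.mk (ι i) (π (i + 1)) (zero i)).ShortExact
  d0_eq : eqToHom hK0 ≫ d 0 = ι 0
  dmid_eq : ∀ i, 1 ≤ i → i + 1 ≤ m → d i = π i ≫ ι i
  dlast_eq : d m = π m ≫ eqToHom hKm

/-- The Yoneda class of the chain of the first `j` short exact sequences,
obtained as the Yoneda composite of their `Ext¹`-classes. -/
noncomputable def ExactExtension.chainClass {m : ℕ} (T : ExactExtension C m) :
    ∀ j : ℕ, Ext (T.K j) (T.K 0) j
  | 0 => Ext.mk₀ (𝟙 _)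
  | (j + 1) => ((T.shortExact j).extClass).comp (T.chainClass j) (by omega)

/-- The Yoneda class `[ξ] ∈ Ext^m (Y (m+1)) (Y 0)` of the exact sequence
`0 → Y 0 → ⋯ → Y (m+1) → 0`, i.e. the Yoneda composite of the `Ext¹`-classes of the
short exact sequences obtained by splicing it at its images. -/
noncomputable def ExactExtension.extClass {m : ℕ} (T : ExactExtension C m) :
    Ext (T.Y (m + 1)) (T.Y 0) m :=
  (Ext.mk₀ (eqToHom T.hKm.symm)).comp
    ((T.chainClass m).comp (Ext.mk₀ (eqToHom T.hK0)) (add_zero m)) (zero_add m)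

/-- Transport of an `Ext`-class along equalities of objects. -/
noncomputable def extTransport {X X' Z Z' : C} {a : ℕ} (e : Ext X Z a)
    (hX : X = X') (hZ : Z = Z') : Ext X' Z' a :=
  (Ext.mk₀ (eqToHom hX.symm)).comp (e.comp (Ext.mk₀ (eqToHom hZ)) (add_zero a)) (zero_add a)

/-- Exactness, at every spot, of the long sequence of abelian groups
`0 → Hom(X,Y⁰) → ⋯ → Hom(X,Y^{n+1}) → Extⁿ(X,Y⁰) → ⋯ → Extⁿ(X,Y^{n+1}) → Ext^{2n}(X,Y⁰) → ⋯`
(`Ext⁰ = Hom`), where within each row the maps are induced by the differentials of `T` and each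
connecting map `Ext^{kn}(X,Y^{n+1}) → Ext^{(k+1)n}(X,Y⁰)` is Yoneda composition with the class
`[T] ∈ Extⁿ(Y^{n+1},Y⁰)`. -/
def CovLES (n : ℕ) (X : C) (T : ExactExtension C n) : Prop :=
  (Function.Injective fun e : Ext X (T.Y 0) 0 => e.comp (Ext.mk₀ (T.d 0)) (add_zero 0)) ∧
  (∀ k i : ℕ, i < n → Function.Exact
      (fun e : Ext X (T.Y i) (k * n) => e.comp (Ext.mk₀ (T.d i)) (add_zero _))
      (fun e : Ext X (T.Y (i + 1)) (k * n) => e.comp (Ext.mk₀ (T.d (i + 1))) (add_zero _))) ∧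
  (∀ k : ℕ, Function.Exact
      (fun e : Ext X (T.Y n) (k * n) => e.comp (Ext.mk₀ (T.d n)) (add_zero _))
      (fun e : Ext X (T.Y (n + 1)) (k * n) =>
        e.comp T.extClass (show k * n + n = (k + 1) * n by ring))) ∧
  (∀ k : ℕ, Function.Exact
      (fun e : Ext X (T.Y (n + 1)) (k * n) =>
        e.comp T.extClass (show k * n + n = (k + 1) * n by ring))
      (fun e : Ext X (T.Y 0) ((k + 1) * n) => e.comp (Ext.mk₀ (T.d 0)) (add_zero _)))

/-- Exactness, at every spot, of the long sequence of abelian groups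
`0 → Hom(Y^{n+1},Z) → ⋯ → Hom(Y⁰,Z) → Extⁿ(Y^{n+1},Z) → ⋯ → Extⁿ(Y⁰,Z) → Ext^{2n}(Y^{n+1},Z) → ⋯`
(`Ext⁰ = Hom`), where within each row the maps are induced by the differentials of `T` and each
connecting map `Ext^{kn}(Y⁰,Z) → Ext^{(k+1)n}(Y^{n+1},Z)` is Yoneda precomposition with the class
`[T] ∈ Extⁿ(Y^{n+1},Y⁰)`. -/
def ContraLES (n : ℕ) (Z : C) (T : ExactExtension C n) : Prop :=
  (Function.Injective fun e : Ext (T.Y (n + 1)) Z 0 => (Ext.mk₀ (T.d n)).comp e (zero_add 0)) ∧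
  (∀ k i : ℕ, i < n → Function.Exact
      (fun e : Ext (T.Y (i + 2)) Z (k * n) => (Ext.mk₀ (T.d (i + 1))).comp e (zero_add _))
      (fun e : Ext (T.Y (i + 1)) Z (k * n) => (Ext.mk₀ (T.d i)).comp e (zero_add _))) ∧
  (∀ k : ℕ, Function.Exact
      (fun e : Ext (T.Y 1) Z (k * n) => (Ext.mk₀ (T.d 0)).comp e (zero_add _))
      (fun e : Ext (T.Y 0) Z (k * n) =>
        T.extClass.comp e (show n + k * n = (k + 1) * n by ring))) ∧
  (∀ k : ℕ, Function.Exact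
      (fun e : Ext (T.Y 0) Z (k * n) =>
        T.extClass.comp e (show n + k * n = (k + 1) * n by ring))
      (fun e : Ext (T.Y (n + 1)) Z ((k + 1) * n) => (Ext.mk₀ (T.d n)).comp e (zero_add _)))

end NZPaper

namespace NZPaper

/-- Cast of an `Ext`-class along an equality of degrees. -/
noncomputable def extCast {C : Type u} [Category.{v} C] [Abelian C] [HasExt.{w} C]
    {X Z : C} {a b : ℕ} (e : Ext X Z a) (h : a = b) : Ext X Z b := h ▸ e

/-- The Yoneda composite `c (k-1) ∘ ⋯ ∘ c 0 ∈ Ext^{kn}(Z k, Z 0)` of a chain of classes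
`c j ∈ Extⁿ(Z (j+1), Z j)`. -/
noncomputable def chainCompose {C : Type u} [Category.{v} C] [Abelian C] [HasExt.{w} C]
    (n : ℕ) (Z : ℕ → C) (c : ∀ j, Ext (Z (j + 1)) (Z j) n) :
    ∀ k : ℕ, Ext (Z k) (Z 0) (k * n)
  | 0 => extCast (Ext.mk₀ (𝟙 (Z 0))) (by omega)
  | (k + 1) => (c k).comp (chainCompose n Z c k) (show n + k * n = (k + 1) * n by ring)

section helpers

variable {C : Type u} [Category.{v} C] [Abelian C]

open HomologicalComplex in
lemma exists_epi_single {B : C} {K : CochainComplex C ℤ}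
    (π : K ⟶ (HomologicalComplex.single C (ComplexShape.up ℤ) 0).obj B)
    [K.IsStrictlyLE 0] [QuasiIsoAt π 0] :
    ∃ (E : C) (p : E ⟶ B) (s : (HomologicalComplex.single C (ComplexShape.up ℤ) 0).obj E ⟶ K),
      Epi p ∧ s ≫ π = (HomologicalComplex.single C (ComplexShape.up ℤ) 0).map p := by
  let e := K.iCyclesIso 0 (0 + 1) (by simp)
    ((K.isZero_of_isStrictlyLE 0 (0 + 1) (by simp)).eq_of_tgt _ _)
  let α := e.inv ≫ K.homologyπ 0 ≫ homologyMap π 0 ≫ (singleObjHomologySelfIso _ _ _).hom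
  have : π.f 0 = α ≫ (singleObjXSelf (ComplexShape.up ℤ) 0 B).inv := by
    rw [← cancel_epi e.hom]
    dsimp only [α]
    rw [Category.assoc, Category.assoc, Category.assoc, Iso.hom_inv_id_assoc,
      homologyπ_naturality_assoc]
    rw [homologyπ_singleObjHomologySelfIso_hom_assoc,
      ← singleObjCyclesSelfIso_inv_iCycles, Iso.hom_inv_id_assoc, cyclesMap_i]
    rfl
  refine ⟨K.X 0, α, mkHomFromSingle (𝟙 _) (fun k hk => by
      apply (K.isZero_of_isStrictlyLE 0 k (by simp at hk; omega)).eq_of_tgt), ?_, ?_⟩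
  · dsimp only [α]
    infer_instance
  · apply HomologicalComplex.from_single_hom_ext
    rw [comp_f, mkHomFromSingle_f, this, HomologicalComplex.single_map_f_self]
    simp

open DerivedCategory in
lemma efface_derived [HasDerivedCategory.{w} C] {B : C} {L : CochainComplex C ℤ}
    (φ : Q.obj ((CochainComplex.singleFunctor C 0).obj B) ⟶ Q.obj L)
    (n : ℤ) (hn : n < 0) [L.IsStrictlyLE n] :
    ∃ (E : C) (p : E ⟶ B), Epi p ∧ Q.map ((CochainComplex.singleFunctor C 0).map p) ≫ φ = 0 := by
  obtain ⟨K, _, π, h, g, rfl⟩ := right_fac_of_isStrictlyLE φ 0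
  rw [isIso_Q_map_iff_quasiIso] at h
  have : QuasiIsoAt (L := (HomologicalComplex.single C (ComplexShape.up ℤ) 0).obj B) π 0 := h.quasiIsoAt 0
  obtain ⟨E, p, s, hp, hs⟩ := exists_epi_single (B := B) π
  refine ⟨E, p, hp, ?_⟩
  have h₂ : s ≫ g = 0 := by
    apply HomologicalComplex.from_single_hom_ext
    apply (L.isZero_of_isStrictlyLE n 0 hn).eq_of_tgt
  change (CochainComplex.singleFunctor C 0).obj E ⟶ K at s
  have h₂ : s ≫ g = 0 := h₂
  have hs : s ≫ π = (CochainComplex.singleFunctor C 0).map p := hs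
  rw [← hs, Q.map_comp, Category.assoc, IsIso.hom_inv_id_assoc, ← Q.map_comp, h₂, Q.map_zero]

open DerivedCategory in
lemma efface [HasExt.{w} C] {B A : C} {m : ℕ} (e : Ext B A (m + 1)) :
    ∃ (E : C) (p : E ⟶ B), Epi p ∧ (Ext.mk₀ p).comp e (zero_add _) = 0 := by
  let := HasDerivedCategory.standard C
  let ψ := e.hom ≫ ((singleFunctors C).shiftIso (m + 1) (-(m + 1)) 0
    (by lia)).hom.app _
  obtain ⟨E, p, hp, h⟩ := efface_derived
    (L := (CochainComplex.singleFunctor C (-(m + 1))).obj A) ψ (-(m + 1)) (by lia)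
  refine ⟨E, p, hp, ?_⟩
  apply Ext.homEquiv.injective
  have h3 : Function.Injective (fun f : (singleFunctor C 0).obj E ⟶ ((singleFunctor C 0).obj A)⟦((m + 1 : ℕ) : ℤ)⟧ => f ≫ ((singleFunctors C).shiftIso (m + 1) (-(m + 1)) 0
    (by lia)).hom.app A) := fun a b hab => (cancel_mono _).1 hab
  apply h3
  have h4 : ((Ext.mk₀ p).comp e (zero_add _)).hom = (singleFunctor C 0).map p ≫ e.hom := by
    simp [ShiftedHom.mk₀_comp]
  change ((Ext.mk₀ p).comp e (zero_add _)).hom ≫ _ = (0 : Ext E A (m+1)).hom ≫ _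
  rw [h4, Ext.zero_hom, Limits.zero_comp, Category.assoc]
  exact h

lemma ext1_realize [HasExt.{w} C] {B A : C} (e : Ext B A 1) :
    ∃ (E : C) (f : A ⟶ E) (g : E ⟶ B) (z : f ≫ g = 0)
      (h : (ShortComplex.mk f g z).ShortExact), h.extClass = e := by
  obtain ⟨E, p, hp, h⟩ := efface e
  have hS : (ShortComplex.mk (kernel.ι p) p (by simp)).ShortExact :=
    { exact := ShortComplex.exact_kernel p
      mono_f := by dsimp; infer_instance
      epi_g := hp }
  obtain ⟨x, hx⟩ := Ext.contravariant_sequence_exact₃ hS A e h (n₀ := 0) (by simp)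
  obtain ⟨a, rfl⟩ := Ext.mk₀_bijective _ _ |>.2 x
  change kernel p ⟶ A at a
  obtain ⟨P, l, r, hP⟩ : ∃ (P : C) (l : E ⟶ P) (r : A ⟶ P), IsPushout (kernel.ι p) a l r :=
    ⟨_, _, _, IsPushout.of_hasPushout _ _⟩
  obtain ⟨g, hg1, hg2⟩ : ∃ g : P ⟶ B, l ≫ g = p ∧ r ≫ g = 0 :=
    ⟨hP.desc p 0 (by simp), hP.inl_desc _ _ _, hP.inr_desc _ _ _⟩
  have hepi : Epi g := by
    have : Epi (l ≫ g) := by rw [hg1]; exact hp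
    exact epi_of_epi l g
  have hmono : Mono r := by
    have := (MorphismProperty.monomorphisms C).of_isPushout hP.flip (.infer_property (kernel.ι p))
    exact this
  have hT : (ShortComplex.mk r g hg2).ShortExact :=
    { mono_f := hmono
      epi_g := hepi
      exact := by
        apply ShortComplex.exact_of_g_is_cokernel
        refine CokernelCofork.IsColimit.ofπ' _ _ (fun {Z} k hk => ⟨?_, ?_⟩)
        · have := hS.epi_g
          exact hS.exact.desc (l ≫ k) (by
            dsimp
            rw [hP.w_assoc, hk, comp_zero])
        · have := hS.epi_g
          apply hP.hom_ext
          · rw [← Category.assoc, hg1]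
            exact hS.exact.g_desc _ _
          · rw [← Category.assoc, hg2]
            exact (zero_comp).trans hk.symm }
  refine ⟨_, _, g, hg2, hT, ?_⟩
  have := ShortComplex.ShortExact.extClass_naturality hS hT
    { τ₁ := a, τ₂ := l, τ₃ := 𝟙 B, comm₁₂ := hP.w.symm, comm₂₃ := by simp [hg1] }
  simp only [Ext.mk₀_id_comp] at this
  rw [← this]
  exact hx

section chains
variable [HasExt.{w} C]
open scoped ZeroObject

/-- Classes of `m`-fold extensions with middle terms in `M`. -/
inductive Ch (M : Set C) : ∀ (m : ℕ) (B A : C), Ext.{w} B A m → Prop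
  | nil (B : C) : Ch M 0 B B (Ext.mk₀ (𝟙 B))
  | cons {m : ℕ} {B A E D : C} (f : A ⟶ E) (g : E ⟶ D) (z : f ≫ g = 0)
      (hS : (ShortComplex.mk f g z).ShortExact) (hE : E ∈ M) (e : Ext.{w} B D m)
      (he : Ch M m B D e) : Ch M (m + 1) B A (e.comp hS.extClass rfl)

lemma Ch.single {M : Set C} {A E D : C} (f : A ⟶ E) (g : E ⟶ D) (z : f ≫ g = 0)
    (hS : (ShortComplex.mk f g z).ShortExact) (hE : E ∈ M) : Ch.{w} M 1 D A hS.extClass := by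
  have := Ch.cons f g z hS hE _ (Ch.nil D)
  rw [Ext.mk₀_id_comp] at this
  exact this

lemma Ch.cast {M : Set C} {m m' : ℕ} {B A : C} {e : Ext.{w} B A m} {e' : Ext.{w} B A m'}
    (h : Ch M m B A e) (hm : m = m') (he : extCast e hm = e') : Ch M m' B A e' := by
  subst hm; subst he; exact h

lemma Ch.trans {M : Set C} {m m' q : ℕ} {B D A : C} {e : Ext.{w} B D m} {e' : Ext.{w} D A m'}
    (h : Ch M m B D e) (h' : Ch M m' D A e') (hq : m + m' = q) :
    Ch M q B A (e.comp e' hq) := by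
  induction h' generalizing q with
  | nil D => 
    obtain rfl : m = q := by omega
    rw [Ext.comp_mk₀_id]; exact h
  | @cons m' D A E D' f g z hS hE e' he' ih =>
    subst hq
    rw [← Ext.comp_assoc e e' hS.extClass (a₁₂ := m + m') rfl rfl rfl]
    exact Ch.cons f g z hS hE _ (ih h rfl)

lemma extTransport_comp {X X' Y Y' Z Z' : C} {a b c : ℕ} (x : Ext.{w} X Y a) (y : Ext.{w} Y Z b)
    (h : a + b = c) (hX : X = X') (hY : Y = Y') (hZ : Z = Z') :
    extTransport (x.comp y h) hX hZ = (extTransport x hX hY).comp (extTransport y hY hZ) h := by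
  subst hX hY hZ
  simp [extTransport]

lemma extTransport_rfl {X Z : C} {a : ℕ} (x : Ext.{w} X Z a) (hX : X = X) (hZ : Z = Z) :
    extTransport x hX hZ = x := by
  simp [extTransport]

lemma chainClass_shift {m m' : ℕ} (T : ExactExtension C m) (T' : ExactExtension C m')
    (hK : ∀ i, T'.K (i + 1) = T.K i)
    (hc : ∀ i, extTransport (T'.shortExact (i + 1)).extClass (hK (i + 1)) (hK i) =
      (T.shortExact i).extClass) (j : ℕ) :
    extTransport (T'.chainClass (j + 1)) (hK j) rfl =
      (T.chainClass j).comp (extTransport (T'.shortExact 0).extClass (hK 0) rfl) rfl := by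
  induction j with
  | zero =>
    simp [ExactExtension.chainClass]
  | succ j ih =>
    have h1 : T'.chainClass (j + 1 + 1) =
      (T'.shortExact (j + 1)).extClass.comp (T'.chainClass (j + 1)) (by omega) := rfl
    have h2 : T.chainClass (j + 1) =
      (T.shortExact j).extClass.comp (T.chainClass j) (by omega) := rfl
    rw [h1, h2, extTransport_comp _ _ _ _ (hK j), ih, hc, Ext.comp_assoc]
    omega

lemma Ch.realize {M : Set C} {m : ℕ} {B A : C} {e : Ext.{w} B A m} (h : Ch M m B A e) :
    ∃ (T : ExactExtension C m) (k0 : T.K 0 = A) (k1 : T.K m = B),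
      (∀ i, 1 ≤ i → i ≤ m → T.Y i ∈ M) ∧ T.π 0 = eqToHom T.hK0.symm ∧ T.ι m = eqToHom T.hKm ∧
      (∀ i, T.d i = T.π i ≫ T.ι i) ∧
      extTransport (T.chainClass m) k1 k0 = e := by
  induction h with
  | nil B =>
    refine ⟨
      { Y := fun i => match i with | 0 => B | 1 => B | (_ + 2) => 0
        K := fun i => match i with | 0 => B | (_ + 1) => 0
        ι := fun i => match i with | 0 => 𝟙 B | (_ + 1) => 0
        π := fun i => match i with | 0 => 𝟙 B | 1 => 0 | (_ + 2) => 0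
        d := fun i => match i with | 0 => 𝟙 B | 1 => 0 | (_ + 2) => 0
        hK0 := rfl
        hKm := rfl
        zero := fun i => match i with | 0 => by simp | (_ + 1) => by simp
        shortExact := fun i => match i with
          | 0 => (ShortComplex.Splitting.mk (S := ShortComplex.mk (𝟙 B) (0 : B ⟶ 0) (by simp))
              (𝟙 B) 0 (by simp) (by simp) (by simp)).shortExact
          | (i + 1) => (ShortComplex.Splitting.mk
              (S := ShortComplex.mk (0 : (0 : C) ⟶ 0) (0 : (0 : C) ⟶ 0) (by simp))
              0 0 (by simp) (by simp) (by simp)).shortExact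
        d0_eq := by simp
        dmid_eq := by intros; omega
        dlast_eq := by simp }, rfl, rfl, ?_, ?_, ?_, ?_, ?_⟩
    · intros; omega
    · rfl
    · rfl
    · rintro (_ | _ | i) <;> simp
    · simp [extTransport, ExactExtension.chainClass]
  | @cons m B A E D f g z hS hE e he ih =>
    obtain ⟨T, rfl, rfl, hT, hπ, hι, hd, rfl⟩ := ih
    let Y' : ℕ → C := fun i => match i with | 0 => A | 1 => E | (i + 2) => T.Y (i + 1)
    let K' : ℕ → C := fun i => match i with | 0 => A | (i + 1) => T.K i
    let ι' : ∀ i, K' i ⟶ Y' (i + 1) := fun i => match i with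
      | 0 => f | (i + 1) => T.ι i
    let π' : ∀ i, Y' i ⟶ K' i := fun i => match i with
      | 0 => 𝟙 A | 1 => g | (i + 2) => T.π (i + 1)
    let T' : ExactExtension C (m + 1) :=
      { Y := Y'
        K := K'
        ι := ι'
        π := π'
        d := fun i => π' i ≫ ι' i
        hK0 := rfl
        hKm := T.hKm
        zero := fun i => match i with | 0 => z | (i + 1) => T.zero i
        shortExact := fun i => match i with | 0 => hS | (i + 1) => T.shortExact i
        d0_eq := by
          change 𝟙 A ≫ 𝟙 A ≫ f = f
          simp
        dmid_eq := fun _ _ _ => rfl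
        dlast_eq := by
          have : ι' (m + 1) = eqToHom T.hKm := hι
          rw [this] }
    refine ⟨T', rfl, rfl, ?_, rfl, hι, fun _ => rfl, ?_⟩
    · rintro (_ | _ | i) h1 h2
      · omega
      · exact hE
      · exact hT _ (by omega) (by omega)
    · rw [chainClass_shift T T' (fun _ => rfl) (fun i => extTransport_rfl _ _ _)]
      rw [extTransport_rfl, extTransport_rfl]

lemma extTransport_trans {X X' X'' Z Z' Z'' : C} {a : ℕ} (e : Ext.{w} X Z a)
    (hX : X = X') (hX' : X' = X'') (hZ : Z = Z') (hZ' : Z' = Z'') :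
    extTransport (extTransport e hX hZ) hX' hZ' = extTransport e (hX.trans hX') (hZ.trans hZ') := by
  subst hX hX' hZ hZ'
  simp [extTransport]

lemma Ch.realize' {M : Set C} {m : ℕ} {B A : C} {e : Ext.{w} B A m} (h : Ch M m B A e)
    (hA : A ∈ M) (hB : B ∈ M) :
    ∃ (T : ExactExtension C m) (e0 : T.Y 0 = A) (e1 : T.Y (m + 1) = B),
      (∀ i ≤ m + 1, T.Y i ∈ M) ∧ extTransport T.extClass e1 e0 = e := by
  obtain ⟨T, k0, k1, hT, -, -, -, hc⟩ := h.realize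
  refine ⟨T, T.hK0.symm.trans k0, T.hKm.symm.trans k1, ?_, ?_⟩
  · intro i hi
    rcases Nat.eq_zero_or_pos i with rfl | h1
    · rw [← T.hK0, k0]; exact hA
    rcases Nat.lt_or_ge m i with h2 | h2
    · obtain rfl : i = m + 1 := by omega
      rw [← T.hKm, k1]; exact hB
    · exact hT i h1 h2
  · rw [← hc]
    exact extTransport_trans (T.chainClass m) T.hKm _ T.hK0 _

/-- Splices of `k` chains of length `n` with end terms in `M`. -/
inductive Ch2 (M : Set C) (n : ℕ) : ∀ (k d : ℕ) (B A : C), Ext.{w} B A d → Prop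
  | nil (B : C) (hB : B ∈ M) : Ch2 M n 0 0 B B (Ext.mk₀ (𝟙 B))
  | cons {k d d' : ℕ} {B A Z : C} (e : Ext.{w} B Z d) (he : Ch2 M n k d B Z e)
      (c : Ext.{w} Z A n) (hc : Ch M n Z A c) (hA : A ∈ M) (h : d + n = d') :
      Ch2 M n (k + 1) d' B A (e.comp c h)

lemma Ch2.prepend {M : Set C} {n k d d' : ℕ} {B Z A : C} {c : Ext.{w} B Z n}
    (hc : Ch M n B Z c) {e : Ext.{w} Z A d} (he : Ch2 M n k d Z A e) (hB : B ∈ M)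
    (h : n + d = d') : Ch2 M n (k + 1) d' B A (c.comp e h) := by
  induction he generalizing d' with
  | nil Z hZ =>
    obtain rfl : n = d' := by omega
    have := Ch2.cons _ (Ch2.nil (n := n) B hB) c hc hZ (zero_add n)
    rw [Ext.mk₀_id_comp] at this
    rwa [Ext.comp_mk₀_id]
  | @cons k d d₁ Z A Z' e he c' hc' hA h' ih =>
    subst h'
    rw [← Ext.comp_assoc c e c' (a₁₂ := n + d) rfl rfl (by omega)]
    exact Ch2.cons _ (ih hc rfl) c' hc' hA _

lemma Ch2.fst_mem {M : Set C} {n k d : ℕ} {B A : C} {e : Ext.{w} B A d}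
    (he : Ch2 M n k d B A e) : B ∈ M := by
  induction he with
  | nil B hB => exact hB
  | cons _ _ _ _ _ _ ih => exact ih

lemma Ch2.snd_mem {M : Set C} {n k d : ℕ} {B A : C} {e : Ext.{w} B A d}
    (he : Ch2 M n k d B A e) : A ∈ M := by
  induction he with
  | nil B hB => exact hB
  | cons _ _ _ _ hA _ _ => exact hA

lemma comp_extCast {X Y Z : C} {a b b' c c' : ℕ} (x : Ext.{w} X Y a) (y : Ext.{w} Y Z b)
    (hb : b = b') (h : a + b = c) (hc : c = c') :
    x.comp (extCast y hb) (by omega : a + b' = c') = extCast (x.comp y h) hc := by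
  subst hb hc; rfl

lemma extCast_comp {X Y Z : C} {a b a' c c' : ℕ} (x : Ext.{w} X Y a) (y : Ext.{w} Y Z b)
    (ha : a = a') (h : a + b = c) (hc : c = c') :
    (extCast x ha).comp y (by omega : a' + b = c') = extCast (x.comp y h) hc := by
  subst ha hc; rfl

lemma chainCompose_shift (n : ℕ) (Z : ℕ → C) (c : ∀ j, Ext.{w} (Z (j + 1)) (Z j) n) (k : ℕ) :
    chainCompose n Z c (k + 1) =
      (chainCompose n (fun j => Z (j + 1)) (fun j => c (j + 1)) k).comp (c 0)
        (by ring : k * n + n = (k + 1) * n) := by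
  induction k with
  | zero =>
    simp only [chainCompose]
    rw [comp_extCast (c := n) _ _ _ rfl (by omega), extCast_comp (c := n) _ _ _ (by omega) (by omega)]
    simp
  | succ k ih =>
    rw [chainCompose, ih, chainCompose, Ext.comp_assoc]
    ring

lemma comp_cast_deg {X Y Z : C} {a b c c' : ℕ} (x : Ext.{w} X Y a) (y : Ext.{w} Y Z b)
    (h : a + b = c) (hc : c = c') :
    extCast (x.comp y h) hc = x.comp y (h.trans hc) := by
  subst hc; rfl

lemma Ch2.realize {M : Set C} {n k d : ℕ} {B A : C} {e : Ext.{w} B A d}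
    (he : Ch2 M n k d B A e) :
    ∃ (Z : ℕ → C) (c : ∀ j, Ext.{w} (Z (j + 1)) (Z j) n),
      (∀ j ≤ k, Z j ∈ M) ∧
      (∀ j < k, Ch M n (Z (j + 1)) (Z j) (c j)) ∧
      ∃ (z0 : Z 0 = A) (zk : Z k = B) (hd : k * n = d),
        extCast (extTransport (chainCompose n Z c k) zk z0) hd = e := by
  induction he with
  | nil B hB =>
    refine ⟨fun _ => B, fun _ => 0, fun _ _ => hB, fun _ h => by omega, rfl, rfl, by omega, ?_⟩
    simp only [chainCompose, extTransport, eqToHom_refl, Ext.comp_mk₀_id, Ext.mk₀_id_comp]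
    generalize_proofs h1 h2
    generalize 0 * n = q at h1 h2
    subst h1
    rfl
  | @cons k d d' B A Z₁ e he c₁ hc hA h ih =>
    obtain ⟨Z, c, hZ, hc', rfl, rfl, rfl, rfl⟩ := ih
    refine ⟨fun j => match j with | 0 => A | (j + 1) => Z j,
      fun j => match j with | 0 => c₁ | (j + 1) => c j, ?_, ?_, rfl, rfl, by rw [← h]; ring, ?_⟩
    · rintro (_ | j) hj
      · exact hA
      · exact hZ _ (by omega)
    · rintro (_ | j) hj
      · exact hc
      · exact hc' _ (by omega)
    · rw [chainCompose_shift]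
      subst h
      rw [extTransport_rfl, extTransport_rfl]
      exact comp_cast_deg (chainCompose n Z c k) c₁ _ _

end chains

section core
variable [HasExt.{w} C]

lemma shortExact_kernel {E B : C} (p : E ⟶ B) [Epi p] :
    (ShortComplex.mk (kernel.ι p) p (by simp)).ShortExact :=
  { exact := ShortComplex.exact_kernel p
    mono_f := by dsimp; infer_instance
    epi_g := by dsimp; infer_instance }

lemma shortExact_cokernel {A E : C} (i : A ⟶ E) [Mono i] :
    (ShortComplex.mk i (cokernel.π i) (by simp)).ShortExact :=
  { exact := ShortComplex.exact_cokernel i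
    mono_f := by dsimp; infer_instance
    epi_g := by dsimp; infer_instance }

/-- `Ext^i(M, K) = 0` for `1 ≤ i < j`. -/
def RV (M : Set C) (j : ℕ) (K : C) : Prop :=
  ∀ X ∈ M, ∀ i : ℕ, 1 ≤ i → i < j → ∀ e : Ext.{w} X K i, e = 0

/-- `Ext^i(K, M) = 0` for `1 ≤ i < j`. -/
def LV (M : Set C) (j : ℕ) (K : C) : Prop :=
  ∀ X ∈ M, ∀ i : ℕ, 1 ≤ i → i < j → ∀ e : Ext.{w} K X i, e = 0

lemma not_dvd_of {n q r j : ℕ} (hq : n ∣ q) (h : r + j = q) (h1 : 1 ≤ j) (h2 : j < n) :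
    ¬ n ∣ r := by
  intro hr
  have : n ∣ j := (Nat.dvd_add_right hr).1 (h ▸ hq)
  have := Nat.le_of_dvd (by omega) this
  omega

/-- Right resolution step. -/
lemma right_res {n : ℕ} {M : Set C} (hM : IsNZClusterTilting.{w} n M) {A B : C}
    (hA : A ∈ M) {q : ℕ} (hnq : n ∣ q) (e : Ext.{w} B A q) :
    ∀ j : ℕ, j ≤ n → ∀ r : ℕ, (h : j + r = q) → ∃ (K : C) (c : Ext.{w} B K j) (e' : Ext.{w} K A r),
      Ch M j B K c ∧ RV.{w} M j K ∧ e = c.comp e' h := by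
  obtain ⟨⟨-, -, hR, hM1, hM2⟩, hZ⟩ := hM
  intro j
  induction j with
  | zero =>
    intro _ r h
    obtain rfl : r = q := by omega
    exact ⟨B, Ext.mk₀ (𝟙 B), e, Ch.nil B, fun _ _ _ h1 h2 => by omega, by simp⟩
  | succ j ih =>
    intro hj r h
    obtain ⟨K, c, e', hc, hK, rfl⟩ := ih (by omega) (r + 1) (by omega)
    obtain ⟨N, p, hN, hp, hpe, hV⟩ : ∃ (N : C) (p : N ⟶ K), N ∈ M ∧ Epi p ∧
        (Ext.mk₀ p).comp e' (zero_add _) = 0 ∧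
        (1 ≤ j → ∀ X' ∈ M, ∀ g : X' ⟶ K, ∃ h : X' ⟶ N, h ≫ p = g) := by
      rcases Nat.eq_zero_or_pos j with rfl | hj1
      · obtain ⟨E, p, hp, hpe⟩ := efface e'
        obtain ⟨N, g, hN, hg, -⟩ := hR E
        refine ⟨N, g ≫ p, hN, epi_comp g p, ?_, fun h => by omega⟩
        rw [← Ext.mk₀_comp_mk₀_assoc, hpe, Ext.comp_zero]
      · obtain ⟨N, p, hN, hp, hf⟩ := hR K
        refine ⟨N, p, hN, hp, ?_, fun _ => hf⟩
        exact hZ N hN A hA (r + 1) (by omega)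
          (not_dvd_of (j := j) hnq (by omega) hj1 (by omega)) _
    have hS := shortExact_kernel p
    obtain ⟨x, hx⟩ := Ext.contravariant_sequence_exact₃ hS A e' hpe (n₀ := r) (by omega)
    refine ⟨kernel p, c.comp hS.extClass rfl, x, Ch.cons _ _ _ hS hN c hc, ?_, ?_⟩
    · intro X hX i hi1 hi2 y
      have hy : y.comp (Ext.mk₀ (kernel.ι p)) (add_zero i) = 0 :=
        (hM2 N).1 hN X hX i hi1 (by omega) _
      obtain ⟨i, rfl⟩ : ∃ i', i = i' + 1 := ⟨i - 1, by omega⟩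
      obtain ⟨y3, rfl⟩ := Ext.covariant_sequence_exact₁ X hS y hy rfl
      rcases Nat.eq_zero_or_pos i with rfl | hi
      · obtain ⟨a, rfl⟩ := (Ext.mk₀_bijective _ _).2 y3
        obtain ⟨b, hb⟩ := hV (by omega) X hX a
        rw [← hb, ← Ext.mk₀_comp_mk₀]
        rw [Ext.comp_assoc_of_second_deg_zero]
        erw [hS.comp_extClass]
        simp
      · rw [hK X hX i hi (by omega) y3, Ext.zero_comp]
    · rw [← hx, Ext.comp_assoc]
      omega

lemma Ch.inj {n : ℕ} {M : Set C} (hM : IsNZClusterTilting.{w} n M) {m : ℕ} {B K : C}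
    {c : Ext.{w} B K m} (hc : Ch M m B K c) {X : C} (hX : X ∈ M) (i : ℕ) (hi : 1 ≤ i)
    (him : m + i ≤ n) (x : Ext.{w} K X i) {q : ℕ} (hq : m + i = q) (h : c.comp x hq = 0) :
    x = 0 := by
  induction hc generalizing i q with
  | nil B =>
    obtain rfl : i = q := by omega
    simpa using h
  | @cons m B A E D f g z hS hE e he ih =>
    rw [Ext.comp_assoc (a₂₃ := 1 + i) _ _ _ _ rfl (by omega)] at h
    have h1 := ih (1 + i) (by omega) (by omega) _ _ h
    obtain ⟨y, rfl⟩ := Ext.contravariant_sequence_exact₁ hS X x rfl h1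
    have : y = 0 := (hM.1.2.2.2.1 E).1 hE X hX i hi (by omega) y
    rw [this, Ext.comp_zero]

/-- Left resolution step. -/
lemma left_res {n : ℕ} {M : Set C} (hM : IsNZClusterTilting.{w} n M) {A B N : C} (hB : B ∈ M)
    (e : Ext.{w} B A n) (a : A ⟶ N) [Mono a] (hN : N ∈ M)
    (hae : e.comp (Ext.mk₀ a) (add_zero n) = 0)
    (hfac : ∀ X ∈ M, ∀ f : A ⟶ X, e.comp (Ext.mk₀ f) (add_zero n) = 0 → ∃ h, a ≫ h = f) :
    ∀ j : ℕ, j + 1 < n → ∀ r : ℕ, (h : r + (j + 1) = n) →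
      ∃ (K : C) (e' : Ext.{w} B K r) (c : Ext.{w} K A (j + 1)),
      Ch M (j + 1) K A c ∧ LV.{w} M (j + 1) K ∧ e = e'.comp c h ∧
      ∀ X ∈ M, ∀ x : Ext.{w} K X (j + 1), e'.comp x h = 0 → x = 0 := by
  obtain ⟨⟨-, hL, -, hM1, hM2⟩, hZ⟩ := hM
  intro j
  induction j with
  | zero =>
    intro hj r h
    have hS := shortExact_cokernel a
    obtain ⟨x, hx⟩ := Ext.covariant_sequence_exact₁ B hS e hae (n₀ := r) (by omega)
    refine ⟨cokernel a, x, hS.extClass, Ch.single _ _ _ hS hN, fun _ _ _ h1 h2 => by omega,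
      hx.symm, ?_⟩
    intro X hX y hy
    have h1 : (Ext.mk₀ (cokernel.π a)).comp y (zero_add _) = 0 :=
      (hM1 N).1 hN X hX 1 le_rfl (by omega) _
    obtain ⟨f, rfl⟩ := Ext.contravariant_sequence_exact₃ hS X y h1 (n₀ := 0) (by omega)
    obtain ⟨f, rfl⟩ := (Ext.mk₀_bijective _ _).2 f
    change A ⟶ X at f
    rw [← Ext.comp_assoc (a₁₂ := n) _ _ _ h _ (by omega), hx] at hy
    obtain ⟨b, rfl⟩ := hfac X hX f hy
    rw [← Ext.mk₀_comp_mk₀]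
    exact hS.extClass_comp_assoc _
  | succ j ih =>
    intro hj r h
    obtain ⟨K, e', c, hc, hK, rfl, hQ⟩ := ih (by omega) (r + 1) (by omega)
    obtain ⟨N, p, hN, hp, hf⟩ := hL K
    have hS := shortExact_cokernel p
    have h0 : e'.comp (Ext.mk₀ p) (add_zero _) = 0 :=
      hZ B hB N hN (r + 1) (by omega)
        (not_dvd_of (j := j + 1) (dvd_refl n) (by omega) (by omega) (by omega)) _
    obtain ⟨x, rfl⟩ := Ext.covariant_sequence_exact₁ B hS e' h0 (n₀ := r) (by omega)
    refine ⟨cokernel p, x, hS.extClass.comp c (by omega), ?_, ?_, ?_, ?_⟩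
    · exact (Ch.single _ _ _ hS hN).trans hc _
    · intro X hX i hi1 hi2 y
      have hy : (Ext.mk₀ (cokernel.π p)).comp y (zero_add _) = 0 :=
        (hM1 N).1 hN X hX i hi1 (by omega) _
      obtain ⟨i, rfl⟩ : ∃ i', i = 1 + i' := ⟨i - 1, by omega⟩
      obtain ⟨y3, rfl⟩ := Ext.contravariant_sequence_exact₃ hS X y hy rfl
      rcases Nat.eq_zero_or_pos i with rfl | hi
      · obtain ⟨f, rfl⟩ := (Ext.mk₀_bijective _ _).2 y3
        obtain ⟨b, hb⟩ := hf X hX f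
        rw [← hb, ← Ext.mk₀_comp_mk₀]
        exact hS.extClass_comp_assoc _
      · rw [hK X hX i hi (by omega) y3, Ext.comp_zero]
    · rw [Ext.comp_assoc]
      omega
    · intro X hX y hy
      have h1 : (Ext.mk₀ (cokernel.π p)).comp y (zero_add _) = 0 :=
        (hM1 N).1 hN X hX (j + 1 + 1) (by omega) (by omega) _
      obtain ⟨y1, rfl⟩ := Ext.contravariant_sequence_exact₃ hS X y h1 (n₀ := j + 1) (by omega)
      rw [← Ext.comp_assoc (a₁₂ := r + 1) _ _ _ rfl _ (by omega)] at hy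
      rw [hQ X hX y1 hy, Ext.comp_zero]

lemma one_fold {n : ℕ} (hn : 1 ≤ n) {M : Set C} (hM : IsNZClusterTilting.{w} n M) {A B : C}
    (hA : A ∈ M) (hB : B ∈ M) (e : Ext.{w} B A n) : Ch M n B A e := by
  rcases Nat.lt_or_ge 1 n with hn1 | hn1
  swap
  · obtain rfl : n = 1 := by omega
    obtain ⟨E, f, g, z, hS, rfl⟩ := ext1_realize e
    exact Ch.single f g z hS ((hM.1.2.2.2.1 E).2 (fun _ _ _ _ _ => by omega))
  obtain ⟨K, c, e', hc, -, he⟩ := right_res hM hA (dvd_refl n) e (n - 1) (by omega) 1 (by omega)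
  obtain ⟨E, f, g, z, hS, rfl⟩ := ext1_realize e'
  obtain ⟨N, p, hN, hp, hf⟩ := hM.1.2.1 E
  have hfm : Mono f := hS.mono_f
  have hmono : Mono (f ≫ p) := mono_comp f p
  obtain ⟨C', x, c', hc', hLV, he', hQ⟩ := left_res hM hB e (f ≫ p) hN
    (by
      rw [he, Ext.comp_assoc_of_third_deg_zero, ← Ext.mk₀_comp_mk₀]
      rw [← Ext.comp_assoc_of_second_deg_zero]
      erw [hS.extClass_comp]
      simp)
    (by
      intro X hX u hu
      rw [he, Ext.comp_assoc_of_third_deg_zero] at hu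
      have h1 := hc.inj hM hX 1 le_rfl (by omega) _ _ hu
      obtain ⟨v, hv⟩ := Ext.contravariant_sequence_exact₁ hS X (Ext.mk₀ u) (by omega) h1
      obtain ⟨v, rfl⟩ := (Ext.mk₀_bijective _ _).2 v
      rw [Ext.mk₀_comp_mk₀] at hv
      have hv := (Ext.mk₀_bijective _ _).1 hv
      obtain ⟨t, ht⟩ := hf X hX v
      exact ⟨t, by rw [Category.assoc, ht]; exact hv⟩)
    (n - 2) (by omega) 1 (by omega)
  obtain ⟨E', f', g', z', hS', rfl⟩ := ext1_realize x
  rw [he']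
  refine Ch.trans (Ch.single f' g' z' hS' ((hM.1.2.2.2.1 E').2 ?_)) hc' _
  intro X hX i hi1 hi2 y
  have h0 : (Ext.mk₀ f').comp y (zero_add _) = 0 := by
    rcases Nat.lt_or_ge i (n - 2 + 1) with h | h
    · exact hLV X hX i hi1 h _
    · obtain rfl : i = n - 2 + 1 := by omega
      exact hQ X hX _ (hS'.extClass_comp_assoc y)
  obtain ⟨w, rfl⟩ := Ext.contravariant_sequence_exact₂ hS' X y h0
  rw [(hM.1.2.2.2.1 B).1 hB X hX i hi1 hi2 w, Ext.comp_zero]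

lemma main_aux {n : ℕ} (hn : 1 ≤ n) {M : Set C} (hM : IsNZClusterTilting.{w} n M) {A : C}
    (hA : A ∈ M) (k : ℕ) : ∀ (q : ℕ) (_ : q = (k + 1) * n) (B : C) (_ : B ∈ M) (e : Ext.{w} B A q),
      Ch2 M n (k + 1) q B A e := by
  induction k with
  | zero =>
    intro q hq B hB e
    obtain rfl : q = n := by omega
    have := Ch2.cons _ (Ch2.nil B hB) e (one_fold hn hM hA hB e) hA (zero_add _)
    rwa [Ext.mk₀_id_comp] at this
  | succ k ih =>
    intro q hq B hB e
    obtain ⟨K, c, e', hc, hV, rfl⟩ := right_res hM hA (q := q) (by rw [hq]; exact dvd_mul_left _ _)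
      e n le_rfl ((k + 1) * n) (by rw [hq]; ring)
    have hK : K ∈ M := (hM.1.2.2.2.2 K).2 hV
    exact Ch2.prepend hc (ih _ rfl K hK e') hB _

end core

end helpers

/-- Let `𝓔` be an abelian category, `n ≥ 1`, `M` an `nℤ`-cluster tilting
subcategory of `𝓔`, `k ≥ 1`, and `ξ : 0 → X⁰ → E¹ → ⋯ → E^{kn} → X^{kn+1} → 0` an exact
sequence in `𝓔` with `X⁰, X^{kn+1} ∈ M`.  Then `ξ` is Yoneda equivalent to a splice of `k`
`n`-exact sequences in `M`: there are objects `Z 0 = X⁰, Z 1, …, Z k = X^{kn+1}` in `M` and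
`n`-exact sequences in `M` from `Z j` to `Z (j+1)` whose Yoneda composite in
`Ext^{kn}(X^{kn+1},X⁰)` equals `[ξ]`. -/
theorem kn_fold_extension_splits_of_nZ_cluster_tilting
    {C : Type u} [Category.{v} C] [Abelian C] [HasExt.{w} C]
    (n : ℕ) (hn : 1 ≤ n) (M : Set C) (hM : IsNZClusterTilting n M)
    (k : ℕ) (hk : 1 ≤ k)
    (S : ExactExtension C (k * n)) (h0 : S.Y 0 ∈ M) (h1 : S.Y (k * n + 1) ∈ M) :
    ∃ (Z : ℕ → C) (c : ∀ j, Ext (Z (j + 1)) (Z j) n),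
      (∀ j ≤ k, Z j ∈ M) ∧
      (∀ j < k, ∃ (T : ExactExtension C n) (e0 : T.Y 0 = Z j) (e1 : T.Y (n + 1) = Z (j + 1)),
        (∀ i ≤ n + 1, T.Y i ∈ M) ∧ extTransport T.extClass e1 e0 = c j) ∧
      ∃ (z0 : Z 0 = S.Y 0) (zk : Z k = S.Y (k * n + 1)),
        extTransport (chainCompose n Z c k) zk z0 = S.extClass := by
  obtain ⟨k, rfl⟩ : ∃ k', k = k' + 1 := ⟨k - 1, by omega⟩
  obtain ⟨Z, c, hZ, hc, z0, zk, _, he⟩ :=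
    (main_aux hn hM h0 k _ rfl _ h1 S.extClass).realize
  exact ⟨Z, c, hZ, fun j hj => (hc j hj).realize' (hZ _ (by omega)) (hZ _ (by omega)),
    z0, zk, he⟩

end NZPaper
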